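/- Let β > −1/2 and γ > 0 be such that β − γ is not a nonnegative integer, and let f(a) = (1 − a)^γ g(a) where g is analytic on a neighborhood of a = 1. Then there exist ε > 0 and a function h analytic on a neighborhood of a = 1 such that w(a) := (1 − a)^{γ+1} h(a) solves L_β w = f on (1 − ε, 1). If instead β − γ is a nonnegative integer, there is a solution of the modified form w(a) = (1 − a)^{γ+1} h(a) + c φ₂(a) ln(1 − a) with h analytic near 1, a suitable constant c, and φ₂(a) = (1−a)^{β+1}(1 + O(1−a)) a solution of L_β φ₂ = 0. -/

import Mathlib

/-!
In the variable `x = 1 - a` the operator `x · L_β` is `T = q₂ θ² + q₁ θ + q₀`, with `θ = x d/dx`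
and `q₀, q₁, q₂` analytic at `0`; its indicial polynomial is `2 t (t - (β + 1))`. Conjugating by
`x ^ s` replaces `θ` by `θ + s`, so for `w = x ^ (γ + 1) H(x)` the equation `L_β w = x ^ γ G(x)`
becomes `T_{γ+1} H = G`. For the Taylor coefficients of `H` this is a lower triangular system with
the values of the indicial polynomial at `γ + 1 + n` on the diagonal. If none of them vanishes, the
system has a unique solution; the quadratic growth of the diagonal absorbs the growth of the other
entries, and a discrete Gronwall inequality shows that the series converges.

If `β = γ + N`, the entry `n = N` vanishes. Writing `H = k + x H₁` with a constant `k` turns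
`T_s H = G` into `T_{s+1} H₁ = R`, so after `N` steps the obstruction sits at the constant term. It
is removed by the logarithm: `T_s (p log x) = (T_s p) log x + (∂T_s/∂s) p`, and when
`T_{β+1} p = 0` and `p 0 = 1` the last term takes the value `2 (β + 1) ≠ 0` at `x = 0`.
-/

noncomputable section

namespace LBetaInhomogeneous

/-- The operator `L_β = (1-a²)∂²_a + 2(a⁻¹ + aβ - a)∂_a - β² + β`. -/
def Lbeta (β : ℝ) (w : ℝ → ℝ) (a : ℝ) : ℝ :=
  (1 - a ^ 2) * deriv (deriv w) a + 2 * (a⁻¹ + a * β - a) * deriv w a + (-β ^ 2 + β) * w a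

open Filter Finset Topology

/-- The solution `k` of the infinite lower triangular system `∑_{i ≤ n} kᵢ a n i = cₙ`, by forward
substitution; it is only meaningful when no diagonal entry `a n n` vanishes. -/
def triangularSolution {𝕜 : Type*} [Field 𝕜] (a : ℕ → ℕ → 𝕜) (c : ℕ → 𝕜) (n : ℕ) : 𝕜 :=
  (c n - ∑ i : Fin n, triangularSolution a c i * a n i) / a n n

lemma sum_triangularSolution_mul {𝕜 : Type*} [Field 𝕜] {a : ℕ → ℕ → 𝕜} (c : ℕ → 𝕜) {n : ℕ}
    (ha : a n n ≠ 0) :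
    ∑ i ∈ range (n + 1), triangularSolution a c i * a n i = c n := by
  rw [sum_range_succ, triangularSolution, div_mul_cancel₀ _ ha,
    ← Fin.sum_univ_eq_sum_range (fun i => triangularSolution a c i * a n i), add_sub_cancel]

lemma le_mul_pow_of_le_add_mul_sum {e : ℕ → ℝ} {B D : ℝ} (hD : 0 ≤ D)
    (he : ∀ n, e n ≤ B + D * ∑ i ∈ range n, e i) (n : ℕ) : e n ≤ B * (1 + D) ^ n := by
  set S : ℕ → ℝ := fun n => B + D * ∑ i ∈ range n, e i with hS
  have hstep : ∀ n ≥ 0, S (n + 1) ≤ (1 + D) * S n + 0 := fun n _ => by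
    have := mul_le_mul_of_nonneg_left (he n) hD
    simp only [hS, sum_range_succ] at this ⊢
    linarith
  refine (he n).trans ?_
  simpa [hS] using discrete_gronwall_prod_general hstep
    (fun _ _ => by positivity) n.zero_le

lemma exists_norm_le_mul_pow_of_triangular {𝕜 : Type*} [NormedField 𝕜] {a : ℕ → ℕ → 𝕜}
    {k c : ℕ → 𝕜} {b : ℕ → ℝ} {C K M ρ : ℝ} (hC : 0 ≤ C) (hρ : 0 < ρ) (hb : ∀ n, 1 ≤ b n)
    (hk : ∀ n, ∑ i ∈ range (n + 1), k i * a n i = c n)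
    (hdiag : ∀ n, b n ≤ K * ‖a n n‖) (ha : ∀ n, ∀ i < n, ‖a n i‖ ≤ C * ρ ^ (n - i) * b i)
    (hc : ∀ n, ‖c n‖ ≤ M * ρ ^ n) :
    ∃ A R : ℝ, 0 < R ∧ ∀ n, ‖k n‖ ≤ A * R ^ n := by
  have hK : 0 ≤ K := (pos_of_mul_pos_left (zero_lt_one.trans_le ((hb 0).trans (hdiag 0)))
    (norm_nonneg _)).le
  -- The weight `b n / ρ ^ n` makes the coefficients of the recursive inequality independent of `n`.
  set e : ℕ → ℝ := fun n => b n * ‖k n‖ / ρ ^ n with he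
  have hrow (n : ℕ) : ‖k n‖ * ‖a n n‖ ≤ M * ρ ^ n + ∑ i ∈ range n, ‖k i‖ * ‖a n i‖ := by
    have hsolve : k n * a n n = c n - ∑ i ∈ range n, k i * a n i := by
      rw [← hk n, sum_range_succ, add_sub_cancel_left]
    rw [← norm_mul, hsolve]
    refine (norm_sub_le _ _).trans (add_le_add (hc n) ((norm_sum_le _ _).trans_eq ?_))
    simp only [norm_mul]
  have hterm (n i : ℕ) (hi : i ∈ range n) : ‖k i‖ * ‖a n i‖ ≤ C * e i * ρ ^ n := by
    have hpow : ρ ^ (n - i) * ρ ^ i = ρ ^ n := pow_sub_mul_pow ρ (mem_range.1 hi).le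
    calc ‖k i‖ * ‖a n i‖ ≤ ‖k i‖ * (C * ρ ^ (n - i) * b i) := by
          gcongr
          exact ha n i (mem_range.1 hi)
      _ = C * e i * ρ ^ n := by rw [he, ← hpow]; field_simp
  have hgronwall (n : ℕ) : e n ≤ K * M + K * C * ∑ i ∈ range n, e i := by
    rw [he, div_le_iff₀ (by positivity)]
    calc b n * ‖k n‖ ≤ K * ‖a n n‖ * ‖k n‖ := by gcongr; exact hdiag n
      _ = K * (‖k n‖ * ‖a n n‖) := by ring
      _ ≤ K * (M * ρ ^ n + ∑ i ∈ range n, C * e i * ρ ^ n) := by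
        gcongr
        exact (hrow n).trans (add_le_add le_rfl (sum_le_sum (hterm n)))
      _ = (K * M + K * C * ∑ i ∈ range n, e i) * ρ ^ n := by
        rw [← sum_mul, ← mul_sum]; ring
  refine ⟨K * M, (1 + K * C) * ρ, by positivity, fun n => ?_⟩
  calc ‖k n‖ ≤ b n * ‖k n‖ := le_mul_of_one_le_left (norm_nonneg _) (hb n)
    _ = e n * ρ ^ n := (div_mul_cancel₀ _ (by positivity)).symm
    _ ≤ K * M * (1 + K * C) ^ n * ρ ^ n := by
      gcongr
      exact le_mul_pow_of_le_add_mul_sum (by positivity) hgronwall n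
    _ = K * M * ((1 + K * C) * ρ) ^ n := by rw [mul_pow, ← mul_assoc]

section TaylorCoeffs

variable {𝕜 : Type*} [NontriviallyNormedField 𝕜] {f g : 𝕜 → 𝕜} {c d : ℕ → 𝕜}

/-- `HasTaylorCoeffs f c` says that `f` is the sum of the power series `∑ cₙ xⁿ` near `0`. -/
def HasTaylorCoeffs (f : 𝕜 → 𝕜) (c : ℕ → 𝕜) : Prop :=
  ∀ᶠ x in 𝓝 0, HasSum (fun n => c n * x ^ n) (f x)

lemma hasTaylorCoeffs_iff_hasFPowerSeriesAt :
    HasTaylorCoeffs f c ↔ HasFPowerSeriesAt f (FormalMultilinearSeries.ofScalars 𝕜 c) 0 := by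
  simp [hasFPowerSeriesAt_iff, HasTaylorCoeffs, FormalMultilinearSeries.coeff_ofScalars, mul_comm]

lemma exists_hasTaylorCoeffs (hf : AnalyticAt 𝕜 f 0) : ∃ c, HasTaylorCoeffs f c := by
  obtain ⟨p, hp⟩ := hf
  refine ⟨p.coeff, ?_⟩
  simpa [hasFPowerSeriesAt_iff, HasTaylorCoeffs, mul_comm] using hp

namespace HasTaylorCoeffs

lemma analyticAt (hf : HasTaylorCoeffs f c) : AnalyticAt 𝕜 f 0 :=
  (hasTaylorCoeffs_iff_hasFPowerSeriesAt.1 hf).analyticAt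

lemma apply_zero (hf : HasTaylorCoeffs f c) : f 0 = c 0 := by
  have hsum := hasSum_single (f := fun n => c n * (0 : 𝕜) ^ n) 0 (fun n hn => by simp [hn])
  simpa using hf.self_of_nhds.unique hsum

lemma eventuallyEq (hf : HasTaylorCoeffs f c) (hg : HasTaylorCoeffs g c) : f =ᶠ[𝓝 0] g := by
  filter_upwards [hf, hg] with x hfx hgx using hfx.unique hgx

lemma add (hf : HasTaylorCoeffs f c) (hg : HasTaylorCoeffs g d) :
    HasTaylorCoeffs (fun x => f x + g x) (fun n => c n + d n) := by
  filter_upwards [hf, hg] with x hfx hgx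
  simpa only [add_mul] using hfx.add hgx

lemma const_mul (t : 𝕜) (hf : HasTaylorCoeffs f c) :
    HasTaylorCoeffs (fun x => t * f x) (fun n => t * c n) := by
  filter_upwards [hf] with x hfx
  simpa only [mul_assoc] using hfx.mul_left t

lemma id_mul_deriv [CompleteSpace 𝕜] (hf : HasTaylorCoeffs f c) :
    HasTaylorCoeffs (fun x => x * deriv f x) (fun n => n * c n) := by
  obtain ⟨r, hr⟩ := hasTaylorCoeffs_iff_hasFPowerSeriesAt.1 hf
  have hfderiv : HasFPowerSeriesAt (fderiv 𝕜 f) _ 0 := ⟨r, hr.fderiv⟩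
  filter_upwards [hasFPowerSeriesAt_iff.1 hfderiv] with x hx
  have hderiv := (hx.mapL (ContinuousLinearMap.apply 𝕜 𝕜 (1 : 𝕜))).mul_left x
  simp only [zero_add, ContinuousLinearMap.apply_apply, _root_.smul_apply,
    FormalMultilinearSeries.derivSeries_coeff_one, FormalMultilinearSeries.coeff_ofScalars,
    fderiv_apply_one_eq_deriv, nsmul_eq_mul, smul_eq_mul] at hderiv
  rw [← hasSum_nat_add_iff' 1]
  simp only [sum_range_one, Nat.cast_zero, zero_mul, sub_zero]
  convert! hderiv using 2
  ring

lemma eventually_exists_norm_le (hf : HasTaylorCoeffs f c) :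
    ∀ᶠ ρ : ℝ in atTop, ∃ M, ∀ n, ‖c n‖ ≤ M * ρ ^ n := by
  obtain ⟨x, hsum, hx : x ≠ 0⟩ :=
    ((hf.filter_mono nhdsWithin_le_nhds).and (self_mem_nhdsWithin (s := {0}ᶜ))).exists
  obtain ⟨M, hM⟩ := hsum.summable.tendsto_atTop_zero.norm.bddAbove_range
  have hMn (n : ℕ) : ‖c n‖ * ‖x‖ ^ n ≤ M := by
    simpa only [norm_mul, norm_pow] using hM ⟨n, rfl⟩
  have : 0 < ‖x‖ := norm_pos_iff.2 hx
  have hM0 : 0 ≤ M := le_trans (by positivity) (hMn 0)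
  filter_upwards [eventually_ge_atTop ‖x‖⁻¹] with ρ hρ
  refine ⟨M, fun n => ?_⟩
  calc ‖c n‖ ≤ M * ‖x‖⁻¹ ^ n := by
        rw [inv_pow, ← div_eq_mul_inv, le_div_iff₀ (by positivity)]; exact hMn n
    _ ≤ M * ρ ^ n := by gcongr

end HasTaylorCoeffs

lemma eventually_summable_norm_of_norm_le {M ρ : ℝ} (hρ : 0 < ρ) (hc : ∀ n, ‖c n‖ ≤ M * ρ ^ n) :
    ∀ᶠ x in 𝓝 (0 : 𝕜), Summable fun n => ‖c n * x ^ n‖ := by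
  have hnear : ∀ᶠ x in 𝓝 (0 : 𝕜), ρ * ‖x‖ < 1 :=
    (by fun_prop : Continuous fun x : 𝕜 => ρ * ‖x‖).continuousAt.eventually_lt_const (by simp)
  filter_upwards [hnear] with x hx
  refine .of_nonneg_of_le (fun _ => norm_nonneg _) (fun n => ?_)
    ((summable_geometric_of_lt_one (by positivity) hx).mul_left M)
  rw [norm_mul, norm_pow, mul_pow, ← mul_assoc]
  gcongr
  exact hc n

variable [CompleteSpace 𝕜]

lemma hasTaylorCoeffs_tsum {M ρ : ℝ} (hρ : 0 < ρ) (hc : ∀ n, ‖c n‖ ≤ M * ρ ^ n) :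
    HasTaylorCoeffs (fun x => ∑' n, c n * x ^ n) c :=
  (eventually_summable_norm_of_norm_le hρ hc).mono fun _ hx => hx.of_norm.hasSum

lemma HasTaylorCoeffs.mul (hf : HasTaylorCoeffs f c) (hg : HasTaylorCoeffs g d) :
    HasTaylorCoeffs (fun x => f x * g x) (fun n => ∑ i ∈ range (n + 1), c i * d (n - i)) := by
  obtain ⟨ρ, ⟨M, hM⟩, ⟨M', hM'⟩, hρ⟩ := (hf.eventually_exists_norm_le.and
    (hg.eventually_exists_norm_le.and (eventually_gt_atTop 0))).exists
  filter_upwards [hf, hg, eventually_summable_norm_of_norm_le hρ hM,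
    eventually_summable_norm_of_norm_le hρ hM'] with x hfx hgx hfs hgs
  have hcauchy := hasSum_sum_range_mul_of_summable_norm hfs hgs
  rw [hfx.tsum_eq, hgx.tsum_eq] at hcauchy
  convert! hcauchy using 2 with n
  rw [sum_mul]
  refine sum_congr rfl fun i hi => ?_
  rw [← pow_mul_pow_sub x (mem_range_succ_iff.1 hi)]
  ring

end TaylorCoeffs

section FrobeniusOperator

variable {𝕜 : Type*} [NontriviallyNormedField 𝕜]

/-- The operator `θ_s = s + x d/dx`, that is, the Euler operator `x d/dx` conjugated by `x ^ s`. -/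
def eulerDeriv (s : 𝕜) (H : 𝕜 → 𝕜) (x : 𝕜) : 𝕜 :=
  s * H x + x * deriv H x

/-- The quadratic polynomial `q₂ t² + q₁ t + q₀` in `t`. With functions `q` and a point `i` it is
the symbol of `frobeniusOp q`, which for `i = 0` is the indicial polynomial; with the Taylor
coefficients of these functions and an index `i` it gives the entries of the triangular system. -/
def symbol {ι : Type*} (q : Fin 3 → ι → 𝕜) (i : ι) (t : 𝕜) : 𝕜 :=
  q 2 i * t ^ 2 + q 1 i * t + q 0 i

/-- The operator `T_s = q₂ θ_s² + q₁ θ_s + q₀`, where `θ_s = eulerDeriv s`: the conjugate by `x ^ s`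
of a second-order operator with a regular singular point at `0`. -/
def frobeniusOp (q : Fin 3 → 𝕜 → 𝕜) (s : 𝕜) (H : 𝕜 → 𝕜) (x : 𝕜) : 𝕜 :=
  q 2 x * eulerDeriv s (eulerDeriv s H) x + q 1 x * eulerDeriv s H x + q 0 x * H x

/-- The derivative `∂T_s/∂s = 2 q₂ θ_s + q₁` of `frobeniusOp q s` with respect to the exponent. -/
def frobeniusOpDeriv (q : Fin 3 → 𝕜 → 𝕜) (s : 𝕜) (H : 𝕜 → 𝕜) (x : 𝕜) : 𝕜 :=
  2 * q 2 x * eulerDeriv s H x + q 1 x * H x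

variable {q : Fin 3 → 𝕜 → 𝕜} {s r k x : 𝕜} {u G H K : 𝕜 → 𝕜}

lemma eulerDeriv_congr (h : H =ᶠ[𝓝 x] K) (s : 𝕜) :
    eulerDeriv s H =ᶠ[𝓝 x] eulerDeriv s K := by
  filter_upwards [h, h.deriv] with y hy hy'
  simp only [eulerDeriv, hy, hy']

lemma eulerDeriv_mul (s : 𝕜) (hu : DifferentiableAt 𝕜 u x) (hH : DifferentiableAt 𝕜 H x) :
    eulerDeriv s (fun y => u y * H y) x = x * deriv u x * H x + u x * eulerDeriv s H x := by
  rw [eulerDeriv, deriv_fun_mul hu hH, eulerDeriv]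
  ring

lemma eulerDeriv_add (s : 𝕜) (hH : DifferentiableAt 𝕜 H x) (hK : DifferentiableAt 𝕜 K x) :
    eulerDeriv s (fun y => H y + K y) x = eulerDeriv s H x + eulerDeriv s K x := by
  rw [eulerDeriv, deriv_fun_add hH hK, eulerDeriv, eulerDeriv]
  ring

lemma frobeniusOp_const (q : Fin 3 → 𝕜 → 𝕜) (s k x : 𝕜) :
    frobeniusOp q s (fun _ => k) x = k * symbol q x s := by
  have hconst (k : 𝕜) : eulerDeriv s (fun _ => k) = fun _ => s * k := by
    funext y; simp [eulerDeriv]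
  rw [frobeniusOp, hconst, hconst, symbol]
  ring

lemma hasTaylorCoeffs_eulerDeriv [CompleteSpace 𝕜] {c : ℕ → 𝕜} (hH : HasTaylorCoeffs H c)
    (s : 𝕜) :
    HasTaylorCoeffs (eulerDeriv s H) (fun n => c n * (s + n)) := by
  convert! (hH.const_mul s).add hH.id_mul_deriv using 2 with n
  ring

lemma hasTaylorCoeffs_frobeniusOp [CompleteSpace 𝕜] {p : Fin 3 → ℕ → 𝕜} {c : ℕ → 𝕜}
    (hq : ∀ j, HasTaylorCoeffs (q j) (p j)) (hH : HasTaylorCoeffs H c) (s : 𝕜) :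
    HasTaylorCoeffs (frobeniusOp q s H)
      (fun n => ∑ i ∈ range (n + 1), c i * symbol p (n - i) (s + i)) := by
  have hH₁ := hasTaylorCoeffs_eulerDeriv hH s
  convert! (((hasTaylorCoeffs_eulerDeriv hH₁ s).mul (hq 2)).add (hH₁.mul (hq 1))).add
    (hH.mul (hq 0)) using 2 with x n
  · rw [frobeniusOp]
    ring
  · simp only [← sum_add_distrib, symbol]
    exact sum_congr rfl fun i _ => by ring

variable [CompleteSpace 𝕜]

lemma analyticAt_eulerDeriv (hH : AnalyticAt 𝕜 H x) (s : 𝕜) :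
    AnalyticAt 𝕜 (eulerDeriv s H) x := by
  have := hH.deriv
  unfold eulerDeriv
  fun_prop

lemma analyticAt_frobeniusOpDeriv (hq : ∀ j, AnalyticAt 𝕜 (q j) x) (hH : AnalyticAt 𝕜 H x)
    (s : 𝕜) : AnalyticAt 𝕜 (frobeniusOpDeriv q s H) x := by
  have := hq 1
  have := hq 2
  have := analyticAt_eulerDeriv hH s
  unfold frobeniusOpDeriv
  fun_prop

lemma frobeniusOp_add (q : Fin 3 → 𝕜 → 𝕜) (s : 𝕜) (hH : AnalyticAt 𝕜 H x)
    (hK : AnalyticAt 𝕜 K x) :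
    frobeniusOp q s (fun y => H y + K y) x = frobeniusOp q s H x + frobeniusOp q s K x := by
  have hadd : eulerDeriv s (fun y => H y + K y)
      =ᶠ[𝓝 x] fun y => eulerDeriv s H y + eulerDeriv s K y := by
    filter_upwards [hH.eventually_analyticAt, hK.eventually_analyticAt] with y hHy hKy
      using eulerDeriv_add s hHy.differentiableAt hKy.differentiableAt
  rw [frobeniusOp, (eulerDeriv_congr hadd s).self_of_nhds, hadd.self_of_nhds,
    eulerDeriv_add s (analyticAt_eulerDeriv hH s).differentiableAt
      (analyticAt_eulerDeriv hK s).differentiableAt, frobeniusOp, frobeniusOp]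
  ring

lemma eulerDeriv_mul_of_homogeneous (s : 𝕜) (hu : AnalyticAt 𝕜 u x) (hH : AnalyticAt 𝕜 H x)
    (hur : ∀ᶠ y in 𝓝 x, y * deriv u y = r * u y) :
    eulerDeriv s (fun y => u y * H y) =ᶠ[𝓝 x] fun y => u y * eulerDeriv (s + r) H y := by
  filter_upwards [hu.eventually_analyticAt, hH.eventually_analyticAt, hur] with y huy hHy hy
  rw [eulerDeriv_mul s huy.differentiableAt hHy.differentiableAt, hy, eulerDeriv, eulerDeriv]
  ring

lemma frobeniusOp_mul_of_homogeneous (q : Fin 3 → 𝕜 → 𝕜) (s : 𝕜) (hu : AnalyticAt 𝕜 u x)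
    (hH : AnalyticAt 𝕜 H x) (hur : ∀ᶠ y in 𝓝 x, y * deriv u y = r * u y) :
    frobeniusOp q s (fun y => u y * H y) x = u x * frobeniusOp q (s + r) H x := by
  have h₁ := eulerDeriv_mul_of_homogeneous s hu hH hur
  have h₂ := eulerDeriv_mul_of_homogeneous s hu (analyticAt_eulerDeriv hH (s + r)) hur
  rw [frobeniusOp, ((eulerDeriv_congr h₁ s).trans h₂).self_of_nhds, h₁.self_of_nhds, frobeniusOp]
  ring

lemma exists_frobeniusOp_const_add_id_mul (hq : ∀ j, AnalyticAt 𝕜 (q j) 0)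
    (hG : AnalyticAt 𝕜 G 0) (hk : k * symbol q 0 s = G 0) :
    ∃ R, AnalyticAt 𝕜 R 0 ∧ ∀ H, AnalyticAt 𝕜 H 0 → ∀ᶠ x in 𝓝 0,
      frobeniusOp q s (fun y => k + y * H y) x = G x + x * (frobeniusOp q (s + 1) H x - R x) := by
  set F : 𝕜 → 𝕜 := fun x => G x - k * symbol q x s with hF
  have hF_zero : F 0 = 0 := by simp only [hF, hk, sub_self]
  have hF_analytic : AnalyticAt 𝕜 F 0 := by
    have := hq 0
    have := hq 1
    have := hq 2
    unfold F symbol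
    fun_prop
  have hR_analytic : AnalyticAt 𝕜 (dslope F 0) 0 :=
    have ⟨_, hp⟩ := hF_analytic
    hp.has_fpower_series_dslope_fslope.analyticAt
  refine ⟨dslope F 0, hR_analytic, fun H hH => ?_⟩
  filter_upwards [hH.eventually_analyticAt] with x hHx
  have hfactor : x * dslope F 0 x = F x := by simpa [hF_zero] using sub_smul_dslope F 0 x
  rw [frobeniusOp_add q s analyticAt_const (by fun_prop), frobeniusOp_const,
    frobeniusOp_mul_of_homogeneous (u := fun y => y) (r := 1) q s analyticAt_id hHx (by simp),
    mul_sub, hfactor, hF]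
  ring

end FrobeniusOperator

lemma analyticAt_rpow_const (s : ℝ) {x : ℝ} (hx : 0 < x) :
    AnalyticAt ℝ (fun y : ℝ => y ^ s) x :=
  (Real.contDiffAt_rpow_const_of_ne hx.ne').analyticAt

lemma frobeniusOp_rpow_mul (q : Fin 3 → ℝ → ℝ) (s : ℝ) {H : ℝ → ℝ} {x : ℝ} (hx : 0 < x)
    (hH : AnalyticAt ℝ H x) :
    frobeniusOp q 0 (fun y => y ^ s * H y) x = x ^ s * frobeniusOp q s H x := by
  have hpow : ∀ᶠ y in 𝓝 x, y * deriv (fun y : ℝ => y ^ s) y = s * y ^ s := by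
    filter_upwards [lt_mem_nhds hx] with y hy
    rw [Real.deriv_rpow_const, Real.rpow_sub_one hy.ne']
    field_simp
  rw [frobeniusOp_mul_of_homogeneous q 0 (analyticAt_rpow_const s hx) hH hpow, zero_add]

lemma eulerDeriv_mul_log (s : ℝ) {H : ℝ → ℝ} {x : ℝ} (hx : x ≠ 0) (hH : AnalyticAt ℝ H x) :
    eulerDeriv s (fun y => H y * Real.log y)
      =ᶠ[𝓝 x] fun y => eulerDeriv s H y * Real.log y + H y := by
  filter_upwards [hH.eventually_analyticAt, isOpen_ne.mem_nhds hx] with y hHy hy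
  simp only [mul_comm (H _)]
  rw [eulerDeriv_mul s (Real.differentiableAt_log hy) hHy.differentiableAt, Real.deriv_log,
    mul_inv_cancel₀ hy]
  ring

lemma frobeniusOp_mul_log (q : Fin 3 → ℝ → ℝ) (s : ℝ) {H : ℝ → ℝ} {x : ℝ} (hx : 0 < x)
    (hH : AnalyticAt ℝ H x) :
    frobeniusOp q s (fun y => H y * Real.log y) x
      = frobeniusOp q s H x * Real.log x + frobeniusOpDeriv q s H x := by
  have hH₁ := analyticAt_eulerDeriv hH s
  have h₁ := eulerDeriv_mul_log s hx.ne' hH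
  have h₂ : eulerDeriv s (fun y => eulerDeriv s H y * Real.log y + H y) x
      = eulerDeriv s (eulerDeriv s H) x * Real.log x + 2 * eulerDeriv s H x := by
    rw [eulerDeriv_add s (hH₁.fun_mul (analyticAt_log hx)).differentiableAt hH.differentiableAt,
      (eulerDeriv_mul_log s hx.ne' hH₁).self_of_nhds]
    ring
  rw [frobeniusOp, (eulerDeriv_congr h₁ s).self_of_nhds, h₂, h₁.self_of_nhds, frobeniusOp,
    frobeniusOpDeriv]
  ring

section FrobeniusMethod

variable {𝕜 : Type*} [RCLike 𝕜] {q : Fin 3 → 𝕜 → 𝕜} {s : 𝕜} {d G : 𝕜 → 𝕜}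

lemma exists_norm_symbol_le {p : Fin 3 → ℕ → 𝕜} {M : Fin 3 → ℝ} {ρ : ℝ} (hρ : 0 ≤ ρ)
    (hp : ∀ j n, ‖p j n‖ ≤ M j * ρ ^ n) (s : 𝕜) :
    ∃ C, 0 ≤ C ∧ ∀ m i : ℕ, ‖symbol p m (s + i)‖ ≤ C * ρ ^ m * ((i : ℝ) + 1) ^ 2 := by
  have hM (j : Fin 3) : 0 ≤ M j := (norm_nonneg _).trans (by simpa using hp j 0)
  have hM₀ := hM 0
  have hM₁ := hM 1
  have hM₂ := hM 2
  refine ⟨(M 2 + M 1 + M 0) * (1 + ‖s‖) ^ 2, by positivity, fun m i => ?_⟩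
  set t : ℝ := (1 + ‖s‖) * (i + 1) with ht
  have ht_one : 1 ≤ t := one_le_mul_of_one_le_of_one_le (by simp) (by simp)
  have ht_norm : ‖s + i‖ ≤ t := by
    have hcross : 0 ≤ ‖s‖ * i := by positivity
    calc ‖s + i‖ ≤ ‖s‖ + i := (norm_add_le s i).trans_eq (by rw [RCLike.norm_natCast])
      _ ≤ t := by rw [ht]; linarith
  calc ‖symbol p m (s + i)‖ ≤ ‖p 2 m‖ * ‖s + i‖ ^ 2 + ‖p 1 m‖ * ‖s + i‖ + ‖p 0 m‖ := by
        simp only [symbol, ← norm_pow, ← norm_mul]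
        exact norm_add₃_le
    _ ≤ M 2 * ρ ^ m * t ^ 2 + M 1 * ρ ^ m * t + M 0 * ρ ^ m := by gcongr <;> apply hp
    _ ≤ M 2 * ρ ^ m * t ^ 2 + M 1 * ρ ^ m * t ^ 2 + M 0 * ρ ^ m * t ^ 2 :=
        add_le_add (by gcongr; exact le_self_pow₀ ht_one two_ne_zero)
          (le_mul_of_one_le_right (by positivity) (one_le_pow₀ ht_one))
    _ = _ := by rw [ht]; ring

lemma tendsto_symbol_div_sq (q : Fin 3 → 𝕜 → 𝕜) (x s : 𝕜) :
    Tendsto (fun n : ℕ => symbol q x (s + n) / ((n : 𝕜) + 1) ^ 2) atTop (𝓝 (q 2 x)) := by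
  have hinv := tendsto_one_div_add_atTop_nhds_zero_nat (𝕜 := 𝕜)
  have hratio : Tendsto (fun n : ℕ => 1 + (s - 1) * (1 / ((n : 𝕜) + 1))) atTop (𝓝 1) := by
    simpa using (hinv.const_mul (s - 1)).const_add 1
  have hlim := (((hratio.pow 2).const_mul (q 2 x)).add
    ((hratio.mul hinv).const_mul (q 1 x))).add ((hinv.pow 2).const_mul (q 0 x))
  convert! hlim using 2 with n
  · have : (n : 𝕜) + 1 ≠ 0 := n.cast_add_one_ne_zero
    rw [symbol]
    field_simp
    ring
  · ring

lemma exists_sq_le_mul_norm_symbol {x : 𝕜} (hq : q 2 x ≠ 0)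
    (hs : ∀ n : ℕ, symbol q x (s + n) ≠ 0) :
    ∃ K, ∀ n : ℕ, ((n : ℝ) + 1) ^ 2 ≤ K * ‖symbol q x (s + n)‖ := by
  obtain ⟨K, hK⟩ := ((tendsto_symbol_div_sq q x s).inv₀ hq).norm.bddAbove_range
  refine ⟨K, fun n => ?_⟩
  have hcast : ‖(n : 𝕜) + 1‖ = (n : ℝ) + 1 := by
    exact_mod_cast RCLike.norm_natCast (K := 𝕜) (n + 1)
  have hKn : ((n : ℝ) + 1) ^ 2 / ‖symbol q x (s + n)‖ ≤ K := by
    simpa [hcast] using hK ⟨n, rfl⟩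
  rwa [div_le_iff₀ (norm_pos_iff.2 (hs n))] at hKn

theorem exists_frobeniusOp_eq (hq : ∀ j, AnalyticAt 𝕜 (q j) 0) (hq₂ : q 2 0 ≠ 0)
    (hs : ∀ n : ℕ, symbol q 0 (s + n) ≠ 0) (hG : AnalyticAt 𝕜 G 0) :
    ∃ H, AnalyticAt 𝕜 H 0 ∧ frobeniusOp q s H =ᶠ[𝓝 0] G := by
  choose p hp using fun j => exists_hasTaylorCoeffs (hq j)
  obtain ⟨c, hc⟩ := exists_hasTaylorCoeffs hG
  set a : ℕ → ℕ → 𝕜 := fun n i => symbol p (n - i) (s + i) with ha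
  have ha_diag (n : ℕ) : a n n = symbol q 0 (s + n) := by
    simp only [ha, symbol, Nat.sub_self, (hp _).apply_zero]
  have hsolves (n : ℕ) : ∑ i ∈ range (n + 1), triangularSolution a c i * a n i = c n :=
    sum_triangularSolution_mul c (ha_diag n ▸ hs n)
  obtain ⟨ρ, hpρ, ⟨M, hM⟩, hρ⟩ :=
    ((eventually_all.2 fun j => (hp j).eventually_exists_norm_le).and
      (hc.eventually_exists_norm_le.and (eventually_gt_atTop 0))).exists
  choose N hN using hpρ
  obtain ⟨C, hC, hsymbol_le⟩ := exists_norm_symbol_le hρ.le hN s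
  obtain ⟨K, hK⟩ := exists_sq_le_mul_norm_symbol hq₂ hs
  obtain ⟨A, R, hR, hbound⟩ := exists_norm_le_mul_pow_of_triangular
    (b := fun n => ((n : ℝ) + 1) ^ 2) hC hρ (fun n => one_le_pow₀ (by simp)) hsolves
    (fun n => by rw [ha_diag]; exact hK n)
    (fun n i _ => hsymbol_le (n - i) i) hM
  have hH := hasTaylorCoeffs_tsum hR hbound
  refine ⟨_, hH.analyticAt, HasTaylorCoeffs.eventuallyEq ?_ hc⟩
  convert! hasTaylorCoeffs_frobeniusOp hp hH s using 1
  exact (funext hsolves).symm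

theorem exists_frobeniusOp_eq_zero (hq : ∀ j, AnalyticAt 𝕜 (q j) 0) (hq₂ : q 2 0 ≠ 0)
    (hs : symbol q 0 s = 0) (hs' : ∀ n : ℕ, symbol q 0 (s + 1 + n) ≠ 0) :
    ∃ H, AnalyticAt 𝕜 H 0 ∧ H 0 = 1 ∧ frobeniusOp q s H =ᶠ[𝓝 0] 0 := by
  obtain ⟨R, hR, hshift⟩ := exists_frobeniusOp_const_add_id_mul (k := 1) (G := 0) hq
    analyticAt_const (by simpa using hs)
  obtain ⟨H, hH, hTH⟩ := exists_frobeniusOp_eq hq hq₂ hs' hR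
  refine ⟨fun x => 1 + x * H x, by fun_prop, by simp, ?_⟩
  filter_upwards [hshift H hH, hTH] with x hx hTx
  simp [hx, hTx]

theorem exists_frobeniusOp_eq_sub_const_mul_pow_mul (hq : ∀ j, AnalyticAt 𝕜 (q j) 0)
    (hq₂ : q 2 0 ≠ 0) (hd : AnalyticAt 𝕜 d 0) (hd₀ : d 0 ≠ 0) (hG : AnalyticAt 𝕜 G 0) (N : ℕ)
    (hs : ∀ n : ℕ, n ≠ N → symbol q 0 (s + n) ≠ 0) :
    ∃ c H, AnalyticAt 𝕜 H 0 ∧ frobeniusOp q s H =ᶠ[𝓝 0] fun x => G x - c * (x ^ N * d x) := by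
  induction N generalizing s G with
  | zero =>
    have hs' (n : ℕ) : symbol q 0 (s + 1 + n) ≠ 0 := by
      simpa [add_assoc] using hs (1 + n) (by omega)
    obtain ⟨R, hR, hshift⟩ := exists_frobeniusOp_const_add_id_mul (k := 0) (s := s)
      (G := fun x => G x - G 0 / d 0 * d x) hq (by fun_prop) (by simp [hd₀])
    obtain ⟨H, hH, hTH⟩ := exists_frobeniusOp_eq hq hq₂ hs' hR
    refine ⟨G 0 / d 0, fun x => 0 + x * H x, by fun_prop, ?_⟩
    filter_upwards [hshift H hH, hTH] with x hx hTx
    rw [hx, hTx]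
    ring
  | succ N ih =>
    have hs₀ : symbol q 0 s ≠ 0 := by simpa using hs 0 N.succ_ne_zero.symm
    have hs' (n : ℕ) (hn : n ≠ N) : symbol q 0 (s + 1 + n) ≠ 0 := by
      simpa [add_assoc] using hs (1 + n) (by omega)
    obtain ⟨R, hR, hshift⟩ :=
      exists_frobeniusOp_const_add_id_mul hq hG (div_mul_cancel₀ (G 0) hs₀)
    obtain ⟨c, H, hH, hTH⟩ := ih hR hs'
    refine ⟨c, fun x => G 0 / symbol q 0 s + x * H x, by fun_prop, ?_⟩
    filter_upwards [hshift H hH, hTH] with x hx hTx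
    rw [hx, hTx]
    ring

theorem exists_frobeniusOp_eq_of_resonance (hq : ∀ j, AnalyticAt 𝕜 (q j) 0) (hq₂ : q 2 0 ≠ 0)
    (hG : AnalyticAt 𝕜 G 0) {N : ℕ} (hN : symbol q 0 (s + N) = 0)
    (hN_simple : 2 * q 2 0 * (s + N) + q 1 0 ≠ 0) (hs : ∀ n : ℕ, n ≠ N → symbol q 0 (s + n) ≠ 0) :
    ∃ H p c, AnalyticAt 𝕜 H 0 ∧ AnalyticAt 𝕜 p 0 ∧ p 0 = 1 ∧
      frobeniusOp q (s + N) p =ᶠ[𝓝 0] 0 ∧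
      frobeniusOp q s H =ᶠ[𝓝 0] fun x => G x - c * (x ^ N * frobeniusOpDeriv q (s + N) p x) := by
  have hs' (n : ℕ) : symbol q 0 (s + N + 1 + n) ≠ 0 := by
    simpa [add_assoc] using hs (N + (1 + n)) (by omega)
  obtain ⟨p, hp, hp₀, hTp⟩ := exists_frobeniusOp_eq_zero hq hq₂ hN hs'
  have hd₀ : frobeniusOpDeriv q (s + N) p 0 ≠ 0 := by
    simpa [frobeniusOpDeriv, eulerDeriv, hp₀, mul_assoc] using hN_simple
  obtain ⟨c, H, hH, hTH⟩ := exists_frobeniusOp_eq_sub_const_mul_pow_mul hq hq₂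
    (analyticAt_frobeniusOpDeriv hq hp _) hd₀ hG N hs
  exact ⟨H, p, c, hH, hp, hp₀, hTp, hTH⟩

end FrobeniusMethod

section LbetaNearOne

variable {β γ : ℝ}

/-- The coefficients `q₀, q₁, q₂` of `x · L_β = q₂ θ² + q₁ θ + q₀`, where `x = 1 - a` and
`θ = x d/dx`. -/
def lbetaCoeff (β : ℝ) : Fin 3 → ℝ → ℝ :=
  ![fun x => (β - β ^ 2) * x,
    fun x => x - 2 - 2 * ((1 - x)⁻¹ + (β - 1) * (1 - x)),
    fun x => 2 - x]

lemma analyticAt_lbetaCoeff_zero (β : ℝ) (j : Fin 3) : AnalyticAt ℝ (lbetaCoeff β j) 0 := by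
  fin_cases j <;> simp only [lbetaCoeff, Fin.reduceFinMk, Fin.zero_eta, Fin.mk_one,
    Matrix.cons_val] <;> fun_prop (disch := norm_num)

lemma symbol_lbetaCoeff_zero (β t : ℝ) : symbol (lbetaCoeff β) 0 t = 2 * t * (t - (β + 1)) := by
  simp only [symbol, lbetaCoeff, Matrix.cons_val]
  ring

lemma symbol_lbetaCoeff_ne_zero {t : ℝ} (ht : t ≠ 0) (ht' : t ≠ β + 1) :
    symbol (lbetaCoeff β) 0 t ≠ 0 := by
  rw [symbol_lbetaCoeff_zero]
  exact mul_ne_zero (mul_ne_zero two_ne_zero ht) (sub_ne_zero.2 ht')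

lemma one_sub_mul_Lbeta (β : ℝ) {w : ℝ → ℝ} {a : ℝ} (hw : AnalyticAt ℝ w (1 - a)) :
    (1 - a) * Lbeta β (fun y => w (1 - y)) a = frobeniusOp (lbetaCoeff β) 0 w (1 - a) := by
  have hderiv : deriv (fun y => w (1 - y)) = fun y => -deriv w (1 - y) := by
    funext y
    exact deriv_comp_const_sub ..
  have hderiv₂ : deriv (fun y => -deriv w (1 - y)) a = deriv (deriv w) (1 - a) := by
    rw [deriv.fun_neg, deriv_comp_const_sub, neg_neg]
  have heuler : eulerDeriv 0 w = fun y => y * deriv w y := by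
    funext y
    simp [eulerDeriv]
  have heuler₂ : eulerDeriv 0 (eulerDeriv 0 w) (1 - a)
      = (1 - a) * (deriv w (1 - a) + (1 - a) * deriv (deriv w) (1 - a)) := by
    rw [heuler, eulerDeriv, deriv_fun_mul differentiableAt_fun_id hw.deriv.differentiableAt]
    simp
  rw [Lbeta, hderiv, hderiv₂, frobeniusOp, heuler₂, heuler]
  simp only [lbetaCoeff, Matrix.cons_val, sub_sub_cancel]
  ring

lemma Lbeta_rpow_mul (β s : ℝ) {H : ℝ → ℝ} {a : ℝ} (ha : a < 1) (hH : AnalyticAt ℝ H (1 - a)) :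
    Lbeta β (fun y => (1 - y) ^ (s + 1) * H (1 - y)) a
      = (1 - a) ^ s * frobeniusOp (lbetaCoeff β) (s + 1) H (1 - a) := by
  have hx : 0 < 1 - a := sub_pos.2 ha
  apply mul_left_cancel₀ hx.ne'
  rw [one_sub_mul_Lbeta β (w := fun y => y ^ (s + 1) * H y)
    ((analyticAt_rpow_const _ hx).mul hH), frobeniusOp_rpow_mul _ _ hx hH,
    Real.rpow_add_one hx.ne']
  ring

lemma Lbeta_rpow_mul_log (β s : ℝ) {p : ℝ → ℝ} {a : ℝ} (ha : a < 1)
    (hp : AnalyticAt ℝ p (1 - a)) :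
    Lbeta β (fun y => (1 - y) ^ (s + 1) * (p (1 - y) * Real.log (1 - y))) a
      = (1 - a) ^ s * (frobeniusOp (lbetaCoeff β) (s + 1) p (1 - a) * Real.log (1 - a)
        + frobeniusOpDeriv (lbetaCoeff β) (s + 1) p (1 - a)) := by
  have hx : 0 < 1 - a := sub_pos.2 ha
  rw [Lbeta_rpow_mul β s (H := fun y => p y * Real.log y) ha (hp.mul (analyticAt_log hx)),
    frobeniusOp_mul_log _ _ hx hp]

lemma Lbeta_add_const_mul (β c : ℝ) {v w : ℝ → ℝ} {a : ℝ} (hv : AnalyticAt ℝ v a)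
    (hw : AnalyticAt ℝ w a) :
    Lbeta β (fun y => v y + c * w y) a = Lbeta β v a + c * Lbeta β w a := by
  have hderiv : deriv (fun y => v y + c * w y) =ᶠ[𝓝 a] fun y => deriv v y + c * deriv w y := by
    filter_upwards [hv.eventually_analyticAt, hw.eventually_analyticAt] with y hvy hwy
    rw [deriv_fun_add hvy.differentiableAt (hwy.differentiableAt.const_mul c),
      deriv_const_mul_field]
  have hderiv₂ : deriv (deriv fun y => v y + c * w y) a
      = deriv (deriv v) a + c * deriv (deriv w) a := by
    rw [hderiv.deriv_eq, deriv_fun_add hv.deriv.differentiableAt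
      (hw.deriv.differentiableAt.const_mul c), deriv_const_mul_field]
  rw [Lbeta, hderiv₂, hderiv.self_of_nhds, Lbeta, Lbeta]
  ring

lemma analyticAt_one_sub_rpow_mul (s : ℝ) {H : ℝ → ℝ} {a : ℝ} (ha : a < 1)
    (hH : AnalyticAt ℝ H (1 - a)) : AnalyticAt ℝ (fun y => (1 - y) ^ s * H (1 - y)) a :=
  ((analyticAt_rpow_const s (sub_pos.2 ha)).mul hH).fun_comp (by fun_prop)

lemma Lbeta_rpow_mul_add_mul_log (β s c : ℝ) {H p : ℝ → ℝ} {a : ℝ} (ha : a < 1)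
    (hH : AnalyticAt ℝ H (1 - a)) (hp : AnalyticAt ℝ p (1 - a)) :
    Lbeta β (fun y => (1 - y) ^ (s + 1) * H (1 - y)
        + c * ((1 - y) ^ (β + 1) * p (1 - y)) * Real.log (1 - y)) a
      = (1 - a) ^ s * frobeniusOp (lbetaCoeff β) (s + 1) H (1 - a)
        + c * ((1 - a) ^ β * (frobeniusOp (lbetaCoeff β) (β + 1) p (1 - a) * Real.log (1 - a)
          + frobeniusOpDeriv (lbetaCoeff β) (β + 1) p (1 - a))) := by
  have hplog : AnalyticAt ℝ (fun x => p x * Real.log x) (1 - a) :=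
    hp.mul (analyticAt_log (sub_pos.2 ha))
  simp only [mul_assoc c, mul_assoc _ (p _)]
  rw [Lbeta_add_const_mul β c (analyticAt_one_sub_rpow_mul _ ha hH)
    (analyticAt_one_sub_rpow_mul _ ha hplog), Lbeta_rpow_mul β s ha hH,
    Lbeta_rpow_mul_log β β ha hp]

lemma tendsto_one_sub_nhdsLT_one : Tendsto (fun a : ℝ => 1 - a) (𝓝[<] 1) (𝓝[>] 0) := by
  refine tendsto_nhdsWithin_iff.2 ⟨?_, ?_⟩
  · exact ((continuous_const.sub continuous_id).tendsto' 1 0 (sub_self 1)).mono_left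
      nhdsWithin_le_nhds
  · filter_upwards [self_mem_nhdsWithin] with a (ha : a < 1) using sub_pos.2 ha

lemma exists_eventually_abs_rpow_mul_sub_le (s : ℝ) {p : ℝ → ℝ} (hp : DifferentiableAt ℝ p 0)
    (hp₀ : p 0 = 1) :
    ∃ C, ∀ᶠ x in 𝓝[>] 0, |x ^ s * p x - x ^ s| ≤ C * x ^ (s + 1) := by
  obtain ⟨C, hC⟩ := hp.isBigO_sub.bound
  refine ⟨C, ?_⟩
  filter_upwards [nhdsWithin_le_nhds hC, self_mem_nhdsWithin] with x hxC (hx : 0 < x)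
  rw [hp₀, sub_zero, Real.norm_of_nonneg hx.le, Real.norm_eq_abs] at hxC
  calc |x ^ s * p x - x ^ s| = x ^ s * |p x - 1| := by
        rw [← mul_sub_one, abs_mul, abs_of_pos (Real.rpow_pos_of_pos hx s)]
    _ ≤ x ^ s * (C * x) := by gcongr
    _ = C * x ^ (s + 1) := by rw [Real.rpow_add_one hx.ne']; ring

theorem exists_Lbeta_eq_of_nonresonant (hγ : ∀ n : ℕ, γ + 1 + n ≠ 0)
    (hβγ : ∀ n : ℕ, β - γ ≠ n) {g : ℝ → ℝ} (hg : AnalyticAt ℝ g 1) :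
    ∃ h, AnalyticAt ℝ h 1 ∧ ∀ᶠ a in 𝓝[<] 1,
      Lbeta β (fun x => (1 - x) ^ (γ + 1) * h x) a = (1 - a) ^ γ * g a := by
  have hs (n : ℕ) : symbol (lbetaCoeff β) 0 (γ + 1 + n) ≠ 0 :=
    symbol_lbetaCoeff_ne_zero (hγ n) fun h => hβγ n (by linarith)
  obtain ⟨H, hH, hTH⟩ := exists_frobeniusOp_eq (analyticAt_lbetaCoeff_zero β)
    (by simp [lbetaCoeff]) hs (hg.fun_comp_of_eq (by fun_prop) (sub_zero 1))
  refine ⟨fun a => H (1 - a), hH.fun_comp_of_eq (by fun_prop) (sub_self 1), ?_⟩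
  filter_upwards [tendsto_one_sub_nhdsLT_one.eventually (nhdsWithin_le_nhds
    (hH.eventually_analyticAt.and hTH)), self_mem_nhdsWithin] with a ⟨hHa, hTHa⟩ ha
  rw [Lbeta_rpow_mul β γ ha hHa, hTHa, sub_sub_cancel]

theorem exists_Lbeta_eq_of_resonant (hγ : ∀ n : ℕ, γ + 1 + n ≠ 0) {N : ℕ} (hN : β - γ = N)
    {g : ℝ → ℝ} (hg : AnalyticAt ℝ g 1) :
    ∃ (h φ : ℝ → ℝ) (c C : ℝ), AnalyticAt ℝ h 1 ∧ ∀ᶠ a in 𝓝[<] 1,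
      Lbeta β φ a = 0 ∧ |φ a - (1 - a) ^ (β + 1)| ≤ C * (1 - a) ^ (β + 2) ∧
      Lbeta β (fun x => (1 - x) ^ (γ + 1) * h x + c * φ x * Real.log (1 - x)) a
        = (1 - a) ^ γ * g a := by
  have hshift : γ + 1 + N = β + 1 := by linarith
  have hs (n : ℕ) (hn : n ≠ N) : symbol (lbetaCoeff β) 0 (γ + 1 + n) ≠ 0 :=
    symbol_lbetaCoeff_ne_zero (hγ n) fun h => hn (Nat.cast_injective (R := ℝ) (by linarith))
  have hN₀ : symbol (lbetaCoeff β) 0 (γ + 1 + N) = 0 := by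
    rw [symbol_lbetaCoeff_zero, hshift, sub_self, mul_zero]
  have hN_simple : 2 * lbetaCoeff β 2 0 * (γ + 1 + N) + lbetaCoeff β 1 0 ≠ 0 := by
    have hβ : β + 1 ≠ 0 := hshift ▸ hγ N
    rw [hshift]
    convert! mul_ne_zero two_ne_zero hβ using 1
    simp only [lbetaCoeff, Matrix.cons_val]
    ring
  obtain ⟨H, p, c, hH, hp, hp₀, hTp, hTH⟩ := exists_frobeniusOp_eq_of_resonance
    (analyticAt_lbetaCoeff_zero β) (by simp [lbetaCoeff])
    (hg.fun_comp_of_eq (f := fun x => 1 - x) (by fun_prop) (sub_zero 1)) hN₀ hN_simple hs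
  rw [hshift] at hTp hTH
  obtain ⟨C, hC⟩ := exists_eventually_abs_rpow_mul_sub_le (β + 1) hp.differentiableAt hp₀
  refine ⟨fun a => H (1 - a), fun a => (1 - a) ^ (β + 1) * p (1 - a), c, C,
    hH.fun_comp_of_eq (by fun_prop) (sub_self 1), ?_⟩
  filter_upwards [tendsto_one_sub_nhdsLT_one.eventually (nhdsWithin_le_nhds
      (hH.eventually_analyticAt.and (hp.eventually_analyticAt.and (hTp.and hTH)))),
    tendsto_one_sub_nhdsLT_one.eventually hC, self_mem_nhdsWithin]
    with a ⟨hHa, hpa, hTpa, hTHa⟩ hCa (ha : a < 1)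
  rw [Pi.zero_apply] at hTpa
  refine ⟨by rw [Lbeta_rpow_mul β β ha hpa, hTpa, mul_zero], ?_, ?_⟩
  · rwa [add_assoc, one_add_one_eq_two] at hCa
  · have hpow : (1 - a) ^ β = (1 - a) ^ γ * (1 - a) ^ N := by
      rw [← Real.rpow_add_natCast (sub_pos.2 ha).ne', ← hN, add_sub_cancel]
    rw [Lbeta_rpow_mul_add_mul_log β γ c ha hHa hpa, hTpa, hTHa, sub_sub_cancel, hpow]
    ring

lemma exists_forall_ball_and_forall_Ioo {P Q : ℝ → Prop} {x : ℝ} (hP : ∀ᶠ a in 𝓝 x, P a)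
    (hQ : ∀ᶠ a in 𝓝[<] x, Q a) :
    ∃ ε > 0, (∀ a ∈ Metric.ball x ε, P a) ∧ ∀ a ∈ Set.Ioo (x - ε) x, Q a := by
  obtain ⟨ε, hε, hPQ⟩ := Metric.eventually_nhds_iff_ball.1
    (hP.and (eventually_nhdsWithin_iff.1 hQ))
  refine ⟨ε, hε, fun a ha => (hPQ a ha).1, fun a ha => (hPQ a ?_).2 ha.2⟩
  rw [Real.ball_eq_Ioo]
  exact ⟨ha.1, ha.2.trans (by linarith)⟩

theorem inhomogeneous_solution_near_one_general {β γ : ℝ} (hγ : ∀ n : ℕ, γ + 1 + n ≠ 0)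
    {g : ℝ → ℝ} (hg : AnalyticAt ℝ g 1) :
    ((¬ ∃ n : ℕ, β - γ = (n : ℝ)) →
      ∃ ε > (0 : ℝ), ∃ h : ℝ → ℝ,
        (∀ a ∈ Metric.ball (1 : ℝ) ε, AnalyticAt ℝ h a) ∧
        (∀ a ∈ Set.Ioo (1 - ε) 1,
          Lbeta β (fun x => (1 - x) ^ (γ + 1) * h x) a = (1 - a) ^ γ * g a)) ∧
    ((∃ n : ℕ, β - γ = (n : ℝ)) →
      ∃ ε > (0 : ℝ), ∃ (h φ₂ : ℝ → ℝ) (c C : ℝ),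
        (∀ a ∈ Metric.ball (1 : ℝ) ε, AnalyticAt ℝ h a) ∧
        (∀ a ∈ Set.Ioo (1 - ε) 1, Lbeta β φ₂ a = 0) ∧
        (∀ a ∈ Set.Ioo (1 - ε) 1, |φ₂ a - (1 - a) ^ (β + 1)| ≤ C * (1 - a) ^ (β + 2)) ∧
        (∀ a ∈ Set.Ioo (1 - ε) 1,
          Lbeta β (fun x => (1 - x) ^ (γ + 1) * h x + c * φ₂ x * Real.log (1 - x)) a
            = (1 - a) ^ γ * g a)) := by
  refine ⟨fun hβγ => ?_, fun ⟨N, hN⟩ => ?_⟩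
  · obtain ⟨h, hh, hsol⟩ := exists_Lbeta_eq_of_nonresonant hγ (not_exists.1 hβγ) hg
    obtain ⟨ε, hε, hball, hIoo⟩ := exists_forall_ball_and_forall_Ioo hh.eventually_analyticAt hsol
    exact ⟨ε, hε, h, hball, hIoo⟩
  · obtain ⟨h, φ, c, C, hh, hsol⟩ := exists_Lbeta_eq_of_resonant hγ hN hg
    obtain ⟨ε, hε, hball, hIoo⟩ := exists_forall_ball_and_forall_Ioo hh.eventually_analyticAt hsol
    exact ⟨ε, hε, h, φ, c, C, hball, fun a ha => (hIoo a ha).1, fun a ha => (hIoo a ha).2.1,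
      fun a ha => (hIoo a ha).2.2⟩

end LbetaNearOne

/-- Solving `L_β w = f` near `a = 1` for `f(a) = (1-a)^γ g(a)` with `g` analytic near `1`:
if `β - γ` is not a nonnegative integer there is a solution `w = (1-a)^{γ+1} h(a)` with `h`
analytic near `1`; if `β - γ` is a nonnegative integer there is a solution of the modified
form `w = (1-a)^{γ+1} h(a) + c φ₂(a) ln(1-a)`, where `φ₂ = (1-a)^{β+1}(1 + O(1-a))` solves
`L_β φ₂ = 0`. -/
theorem inhomogeneous_solution_near_one (β γ : ℝ) (hβ : -(1 : ℝ) / 2 < β) (hγ : 0 < γ)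
    (g : ℝ → ℝ) (ε₀ : ℝ) (hε₀ : 0 < ε₀)
    (hg : ∀ a ∈ Metric.ball (1 : ℝ) ε₀, AnalyticAt ℝ g a) :
    ((¬ ∃ n : ℕ, β - γ = (n : ℝ)) →
      ∃ ε > (0 : ℝ), ∃ h : ℝ → ℝ,
        (∀ a ∈ Metric.ball (1 : ℝ) ε, AnalyticAt ℝ h a) ∧
        (∀ a ∈ Set.Ioo (1 - ε) 1,
          Lbeta β (fun x => (1 - x) ^ (γ + 1) * h x) a = (1 - a) ^ γ * g a)) ∧
    ((∃ n : ℕ, β - γ = (n : ℝ)) →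
      ∃ ε > (0 : ℝ), ∃ (h φ₂ : ℝ → ℝ) (c C : ℝ),
        (∀ a ∈ Metric.ball (1 : ℝ) ε, AnalyticAt ℝ h a) ∧
        (∀ a ∈ Set.Ioo (1 - ε) 1, Lbeta β φ₂ a = 0) ∧
        (∀ a ∈ Set.Ioo (1 - ε) 1, |φ₂ a - (1 - a) ^ (β + 1)| ≤ C * (1 - a) ^ (β + 2)) ∧
        (∀ a ∈ Set.Ioo (1 - ε) 1,
          Lbeta β (fun x => (1 - x) ^ (γ + 1) * h x + c * φ₂ x * Real.log (1 - x)) a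
            = (1 - a) ^ γ * g a)) := by
  have hγ' (n : ℕ) : γ + 1 + n ≠ 0 := by positivity
  exact inhomogeneous_solution_near_one_general hγ' (hg 1 (Metric.mem_ball_self hε₀))

end LBetaInhomogeneous
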